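/- arXiv:1605.01142 — 9 statements merged into one kernel-verified Lean document; each statement's English description precedes it below -/
import Mathlib

section
/- Let X, Y, Z be jointly distributed random variables taking values in finite sets such that X ↔ Y ↔ Z is a Markov chain. Then Δ((X,Y,Z), X⊗Y⊗Z) ≤ Δ((X,Y), X⊗Y) + Δ((Y,Z), Y⊗Z), where X⊗Y⊗Z denotes the product of the three marginal distributions and X⊗Y, Y⊗Z the products of the respective pairs of marginals. -/
/-!
Insert the hybrid distribution `(X,Y) ⊗ Z` between `(X,Y,Z)` and `X ⊗ Y ⊗ Z`. By the triangle
inequality the distance is at most `Δ((X,Y,Z), (X,Y) ⊗ Z) + Δ((X,Y) ⊗ Z, X ⊗ Y ⊗ Z)`. The second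
term is `Δ((X,Y), X ⊗ Y)`, since the factor `Z` sums to one. In the first term the Markov property
lets one factor out the conditional law of `X` given `Y` from both distributions, and summing over
`X` leaves `Δ((Y,Z), Y ⊗ Z)`.
-/

open scoped Classical
open Finset

/-- The inequality for abstract marginals: `u`, `v` stand for the laws of `(X,Y)` and `(Y,Z)`, and
`a`, `m`, `b` for those of `X`, `Y`, `Z`. The Markov property enters as `p = u * v / m`, with the
convention `0 / 0 = 0` covering the points where `m` vanishes. -/
lemma sum_abs_markov_le {X Y Z : Type*} [Fintype X] [Fintype Y] [Fintype Z]
    (p : X × Y × Z → ℝ) (u : X → Y → ℝ) (v : Y → Z → ℝ) (a : X → ℝ) (m : Y → ℝ) (b : Z → ℝ)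
    (hu : ∀ x y, 0 ≤ u x y) (hm : ∀ y, 0 ≤ m y) (hb : ∀ z, 0 ≤ b z)
    (hum : ∀ y, ∑ x, u x y = m y) (hb1 : ∑ z, b z = 1)
    (hp : ∀ x y z, p (x, y, z) = u x y * v y z / m y) :
    ∑ t : X × Y × Z, |p t - a t.1 * m t.2.1 * b t.2.2| ≤
      ∑ q : X × Y, |u q.1 q.2 - a q.1 * m q.2| + ∑ q : Y × Z, |v q.1 q.2 - m q.1 * b q.2| := by
  have hu0 : ∀ x y, m y = 0 → u x y = 0 := fun x y h =>
    (Finset.sum_eq_zero_iff_of_nonneg (fun i _ => hu i y)).1 ((hum y).trans h) x (mem_univ x)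
  have key : ∀ x y z, |p (x, y, z) - a x * m y * b z| ≤
      |u x y - a x * m y| * b z + u x y / m y * |v y z - m y * b z| := by
    intro x y z
    have e : p (x, y, z) - a x * m y * b z =
        (u x y - a x * m y) * b z + u x y / m y * (v y z - m y * b z) := by
      rw [hp]
      by_cases h : m y = 0
      · simp [h, hu0 x y h]
      · field_simp
        ring
    rw [e]
    refine (abs_add_le _ _).trans_eq ?_
    rw [abs_mul, abs_mul, abs_of_nonneg (hb z), abs_of_nonneg (div_nonneg (hu x y) (hm y))]
  simp only [Fintype.sum_prod_type]
  calc ∑ x, ∑ y, ∑ z, |p (x, y, z) - a x * m y * b z|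
      ≤ ∑ x, ∑ y, ∑ z, (|u x y - a x * m y| * b z + u x y / m y * |v y z - m y * b z|) :=
        sum_le_sum fun x _ => sum_le_sum fun y _ => sum_le_sum fun z _ => key x y z
    _ = ∑ x, ∑ y, |u x y - a x * m y| +
          ∑ y, (∑ x, u x y / m y) * ∑ z, |v y z - m y * b z| := by
        simp only [sum_add_distrib, ← mul_sum, hb1, mul_one]
        rw [sum_comm (f := fun x y => u x y / m y * _)]
        simp only [sum_mul]
    _ ≤ _ := by
        gcongr with y
        rw [← sum_div, hum]
        exact mul_le_of_le_one_left (sum_nonneg fun _ _ => abs_nonneg _) (div_self_le_one _)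

/-- if `X ↔ Y ↔ Z` is a Markov chain (joint pmf `p` on `X × Y × Z`),
then `Δ((X,Y,Z), X⊗Y⊗Z) ≤ Δ((X,Y), X⊗Y) + Δ((Y,Z), Y⊗Z)`, where `Δ` is total
variation distance and `⊗` denotes products of the marginal distributions. -/
theorem stmt_5 {X Y Z : Type*} [Fintype X] [Fintype Y] [Fintype Z]
    (p : X × Y × Z → ℝ)
    (hp0 : ∀ t, 0 ≤ p t) (hp1 : ∑ t, p t = 1)
    (hmc : ∀ y : Y, 0 < (∑ a, ∑ c, p (a, y, c)) →
      ∀ x z, p (x, y, z) / (∑ a, ∑ c, p (a, y, c)) =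
        ((∑ c, p (x, y, c)) / (∑ a, ∑ c, p (a, y, c))) *
        ((∑ a, p (a, y, z)) / (∑ a, ∑ c, p (a, y, c)))) :
    (1 / 2) * ∑ t : X × Y × Z,
        |p t - (∑ b, ∑ c, p (t.1, b, c)) * (∑ a, ∑ c, p (a, t.2.1, c)) *
          (∑ a, ∑ b, p (a, b, t.2.2))| ≤
      (1 / 2) * ∑ q : X × Y, |(∑ c, p (q.1, q.2, c)) -
          (∑ b, ∑ c, p (q.1, b, c)) * (∑ a, ∑ c, p (a, q.2, c))| +
      (1 / 2) * ∑ q : Y × Z, |(∑ a, p (a, q.1, q.2)) -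
          (∑ a, ∑ c, p (a, q.1, c)) * (∑ a, ∑ b, p (a, b, q.2))| := by
  have hb1 : ∑ z, ∑ a, ∑ b, p (a, b, z) = 1 := by
    rw [← hp1, Fintype.sum_prod_type, sum_comm]
    refine sum_congr rfl fun x _ => ?_
    rw [Fintype.sum_prod_type, sum_comm]
  have hm : ∀ y, 0 ≤ ∑ a, ∑ c, p (a, y, c) := fun y =>
    sum_nonneg fun _ _ => sum_nonneg fun _ _ => hp0 _
  have hp : ∀ x y z, p (x, y, z) =
      (∑ c, p (x, y, c)) * (∑ a, p (a, y, z)) / ∑ a, ∑ c, p (a, y, c) := by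
    intro x y z
    rcases (hm y).eq_or_lt with h | h
    · -- Here `y` has probability zero, so `p (x, y, z)` vanishes as well.
      have h1 := (sum_eq_zero_iff_of_nonneg
        (fun i _ => sum_nonneg fun _ _ => hp0 _)).1 h.symm x (mem_univ x)
      have h2 := (sum_eq_zero_iff_of_nonneg (fun i _ => hp0 _)).1 h1 z (mem_univ z)
      rw [← h, div_zero, h2]
    · have h1 := hmc y h x z
      have h0 := h.ne'
      field_simp at h1
      rw [eq_div_iff h0]
      linarith
  have main := sum_abs_markov_le p (fun x y => ∑ c, p (x, y, c)) (fun y z => ∑ a, p (a, y, z))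
    (fun x => ∑ b, ∑ c, p (x, b, c)) (fun y => ∑ a, ∑ c, p (a, y, c))
    (fun z => ∑ a, ∑ b, p (a, b, z)) (fun _ _ => sum_nonneg fun _ _ => hp0 _) hm
    (fun _ => sum_nonneg fun _ _ => sum_nonneg fun _ _ => hp0 _) (fun _ => rfl) hb1 hp
  rw [← mul_add]
  exact mul_le_mul_of_nonneg_left main (by norm_num)
end

section
/- Let A and B be jointly distributed random variables with A taking values in {0,1} and B taking values in a finite set S. Let p = Pr(A=0), and let B⁰ and B¹ denote the conditional distributions of B given A=0 and A=1 respectively. Then I(A:B) ≤ 2·log₂(e) · Δ(p·B⁰, (1−p)·B¹), where Δ of the two (unnormalized) nonnegative functions p·B⁰ and (1−p)·B¹ on S is (1/2)·Σ_{s∈S} | p·B⁰(s) − (1−p)·B¹(s) |. -/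
/-!
Write `x s = p (false, s)`, `y s = p (true, s)`, with masses `X + Y = 1`. In nats,
`I(A:B) = H(A) - H(A|B) ≤ log 2 - H(A|B)`, and `log t ≤ t - 1` bounds `log 2 - H(A|B)` by
`∑ (x - y)² / (x + y) ≤ ∑ |x - y|`. Both inequalities are obtained termwise in `term_bound`:
the parts `x * (1 / (2 * X) - 1)`, which account for `H(A) ≤ log 2`, sum to at most
`(1/2 - X) + (1/2 - Y) = 0` (`marginal_bound`), and the remaining parts are treated in `pair_bound`.
-/

/-- One summand of `I(A:B)`, in nats: the logarithm splits as
`log (2x / (x+y)) + log (1 / (2X))` and each part is bounded by `log t ≤ t - 1`. -/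
lemma term_bound {x y X : ℝ} (hx : 0 ≤ x) (hxX : x ≤ X) (hy : 0 ≤ y) :
    x * Real.log (x / (X * (x + y))) ≤
      x * (2 * x / (x + y) - 1) + x * (1 / (2 * X) - 1) := by
  rcases hx.eq_or_lt with rfl | hx
  · simp
  have hX : 0 < X := hx.trans_le hxX
  have hm : 0 < x + y := by linarith
  have h : x / (X * (x + y)) = (2 * x / (x + y)) * (1 / (2 * X)) := by field_simp
  rw [h, Real.log_mul (by positivity) (by positivity), ← mul_add]
  have h1 := Real.log_le_sub_one_of_pos (x := 2 * x / (x + y)) (by positivity)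
  have h2 := Real.log_le_sub_one_of_pos (x := 1 / (2 * X)) (by positivity)
  exact mul_le_mul_of_nonneg_left (by linarith) hx.le

/-- The two linearised terms at a point add up to `(x - y)² / (x + y)`, and
`|x - y| ≤ x + y`. -/
lemma pair_bound {x y : ℝ} (hx : 0 ≤ x) (hy : 0 ≤ y) :
    x * (2 * x / (x + y) - 1) + y * (2 * y / (y + x) - 1) ≤ |x - y| := by
  rcases (add_nonneg hx hy).eq_or_lt with h | hm
  · have hx0 : x = 0 := by linarith
    have hy0 : y = 0 := by linarith
    simp [hx0, hy0]
  have h : x * (2 * x / (x + y) - 1) + y * (2 * y / (y + x) - 1) = |x - y| ^ 2 / (x + y) := by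
    rw [sq_abs, add_comm y x]; field_simp; ring
  have hle : |x - y| ≤ x + y := abs_le.2 ⟨by linarith, by linarith⟩
  rw [h, div_le_iff₀ hm, sq]
  exact mul_le_mul_of_nonneg_left hle (abs_nonneg _)

lemma marginal_bound {X : ℝ} : X * (1 / (2 * X) - 1) ≤ 1 / 2 - X := by
  rcases eq_or_ne X 0 with rfl | h
  · norm_num
  · apply le_of_eq; field_simp

/-- Multiplying the conditional distribution by its normalising mass recovers the joint one,
also when that mass vanishes. -/
lemma mass_mul_cond {S : Type*} [Fintype S] (f : S → ℝ) (hf : ∀ s, 0 ≤ f s) (s : S) :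
    (∑ s', f s') * (f s / ∑ s', f s') = f s := by
  rcases eq_or_ne (∑ s', f s') 0 with h | h
  · have := (Finset.sum_eq_zero_iff_of_nonneg (fun i _ => hf i)).1 h s (Finset.mem_univ s)
    simp [this]
  · field_simp

/-- The mutual information `I(A:B)` of jointly distributed finite random variables
with joint probability mass function `p`:
`I(A:B) = Σ_{a,b} p(a,b) · log₂(p(a,b) / (p(a)·p(b)))` (terms with `p(a,b)=0` are `0`,
by the convention `log 0 = 0` of `Real.logb`). -/
noncomputable def mutualInfo {A B : Type*} [Fintype A] [Fintype B] (p : A × B → ℝ) : ℝ :=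
  ∑ a, ∑ b, p (a, b) * Real.logb 2 (p (a, b) / ((∑ b', p (a, b')) * (∑ a', p (a', b))))

/-- `I` vs `Δ` for a binary variable: with `A ∈ {0,1}` (here `Bool`,
`false ↔ 0`, `true ↔ 1`), `p = Pr(A = 0)`, and `B⁰, B¹` the conditional distributions
of `B` given `A = 0` resp. `A = 1` (given by division, a valid arbitrary choice when
the conditioning event has probability `0`),
`I(A:B) ≤ 2·log₂(e) · Δ(p·B⁰, (1−p)·B¹)`. -/
theorem stmt_9 {S : Type*} [Fintype S]
    (p : Bool × S → ℝ) (hp0 : ∀ z, 0 ≤ p z) (hp1 : ∑ z, p z = 1) :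
    mutualInfo p ≤ 2 * Real.logb 2 (Real.exp 1) *
      ((1 / 2) * ∑ s, |(∑ s', p (false, s')) * (p (false, s) / (∑ s', p (false, s'))) -
        (1 - (∑ s', p (false, s'))) * (p (true, s) / (∑ s', p (true, s')))|) := by
  have hsum : (∑ s, p (true, s)) + ∑ s, p (false, s) = 1 := by
    rw [← hp1, Fintype.sum_prod_type, Fintype.sum_bool]
  have hY : 1 - (∑ s', p (false, s')) = ∑ s', p (true, s') := by linarith
  rw [hY]
  simp only [mass_mul_cond (fun s => p (false, s)) (fun s => hp0 _),
    mass_mul_cond (fun s => p (true, s)) (fun s => hp0 _)]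
  have hl : 0 < Real.log 2 := Real.log_pos (by norm_num)
  -- the same inequality in nats
  have key : ∑ s, (p (true, s) * Real.log (p (true, s) /
        ((∑ s', p (true, s')) * (p (true, s) + p (false, s)))) +
      p (false, s) * Real.log (p (false, s) /
        ((∑ s', p (false, s')) * (p (false, s) + p (true, s))))) ≤
      ∑ s, |p (false, s) - p (true, s)| := by
    set X := ∑ s', p (false, s') with hX
    set Y := ∑ s', p (true, s') with hYd
    have hterm : ∀ s, p (true, s) * Real.log (p (true, s) / (Y * (p (true, s) + p (false, s)))) +
        p (false, s) * Real.log (p (false, s) / (X * (p (false, s) + p (true, s)))) ≤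
        |p (false, s) - p (true, s)| +
          (p (true, s) * (1 / (2 * Y) - 1) + p (false, s) * (1 / (2 * X) - 1)) := by
      intro s
      have h1 := term_bound (hp0 (true, s)) (Finset.single_le_sum
        (f := fun s => p (true, s)) (fun i _ => hp0 _) (Finset.mem_univ s)) (hp0 (false, s))
      have h2 := term_bound (hp0 (false, s)) (Finset.single_le_sum
        (f := fun s => p (false, s)) (fun i _ => hp0 _) (Finset.mem_univ s)) (hp0 (true, s))
      have h3 := pair_bound (hp0 (false, s)) (hp0 (true, s))
      simp only [← hX, ← hYd] at h1 h2
      linarith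
    refine (Finset.sum_le_sum fun s _ => hterm s).trans ?_
    rw [Finset.sum_add_distrib, Finset.sum_add_distrib, ← Finset.sum_mul, ← Finset.sum_mul,
      ← hX, ← hYd]
    have h1 := marginal_bound (X := X)
    have h2 := marginal_bound (X := Y)
    linarith
  have hI : mutualInfo p = (∑ s, (p (true, s) * Real.log (p (true, s) /
        ((∑ s', p (true, s')) * (p (true, s) + p (false, s)))) +
      p (false, s) * Real.log (p (false, s) /
        ((∑ s', p (false, s')) * (p (false, s) + p (true, s)))))) / Real.log 2 := by
    unfold mutualInfo
    simp only [Fintype.sum_bool, Real.logb]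
    rw [← Finset.sum_add_distrib, Finset.sum_div]
    refine Finset.sum_congr rfl fun s _ => ?_
    rw [add_comm (p (false, s)) (p (true, s))]
    ring
  rw [hI, div_le_iff₀ hl, Real.logb, Real.log_exp]
  refine key.trans (le_of_eq ?_)
  field_simp
end

section
/- Let A and B be jointly distributed random variables with A taking values in {0,1} and B taking values in a finite set S. Then there exists a function M : S → {0,1} such that Pr( M(B) = A ) ≥ 1/2 + I(A:B)/3. -/
/-!
The guess `M b` is the more likely value of `A` given `B = b`, so it succeeds with probability
`∑ b, max (p (0, b)) (p (1, b))` and fails with probability `P_err = ∑ b, min (p (0, b)) (p (1, b))`.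
By concavity the binary entropy satisfies `h(q) ≥ 2 min(q, 1 - q)` (in bits), since `h` vanishes at
`0` and `1` and equals `1` at `1/2`; this is `entropy_term_le`, in homogeneous form. Averaging over `b`
gives `H(A|B) ≥ 2 P_err`, and `H(A) ≤ 1`, so `I(A:B) = H(A) - H(A|B) ≤ 1 - 2 P_err`. That is, the
success probability is at least `1/2 + I(A:B)/2`. As it is also at least `1/2`, a convex
combination of the two bounds gives `1/2 + I(A:B)/3`.
-/

open scoped Classical
open Finset

lemma two_mul_log_two_le_binEntropy {q : ℝ} (h0 : 0 ≤ q) (h1 : q ≤ 1 / 2) :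
    2 * q * Real.log 2 ≤ Real.binEntropy q := by
  have hc := Real.strictConcave_binEntropy.concaveOn.2
    (show (0 : ℝ) ∈ Set.Icc 0 1 by norm_num) (show (2⁻¹ : ℝ) ∈ Set.Icc 0 1 by norm_num)
    (show 0 ≤ 1 - 2 * q by linarith) (show 0 ≤ 2 * q by linarith) (by ring)
  simp only [smul_eq_mul, Real.binEntropy_zero, Real.binEntropy_two_inv, mul_zero, zero_add] at hc
  rwa [show 2 * q * 2⁻¹ = q by ring] at hc

/-- The contribution of one value of `B` to `-H(A|B)`, in nats, where `x` and `y` are the joint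
probabilities of that value with the two values of `A`. -/
lemma entropy_term_le {x y : ℝ} (hx : 0 ≤ x) (hy : 0 ≤ y) :
    x * Real.log (x / (x + y)) + y * Real.log (y / (x + y)) ≤ -(2 * min x y * Real.log 2) := by
  wlog hxy : x ≤ y generalizing x y
  · have := this hy hx (le_of_not_ge hxy)
    rw [min_comm, add_comm x y]
    linarith
  rw [min_eq_left hxy]
  rcases (add_nonneg hx hy).eq_or_lt' with hs | hs
  · have : x = 0 := by linarith
    have : y = 0 := by linarith
    simp [*]
  · have hq := two_mul_log_two_le_binEntropy (q := x / (x + y)) (by positivity)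
      (by rw [div_le_div_iff₀ hs two_pos]; linarith)
    have hy' : 1 - x / (x + y) = y / (x + y) := by field_simp; ring
    rw [Real.binEntropy, hy', Real.log_inv, Real.log_inv] at hq
    have := mul_le_mul_of_nonneg_left hq hs.le
    have ex : (x + y) * (x / (x + y)) = x := by field_simp
    have ey : (x + y) * (y / (x + y)) = y := by field_simp
    linear_combination this - (2 * Real.log 2 + Real.log (x / (x + y))) * ex
      - Real.log (y / (x + y)) * ey

/-- Splits a term of the mutual information into its `-H(A|B)` and `H(A)` parts. -/
lemma mul_log_split {t u v : ℝ} (ht : 0 ≤ t) (hu : t ≤ u) (hv : t ≤ v) :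
    t * Real.log (t / (u * v)) = t * Real.log (t / v) - t * Real.log u := by
  rcases ht.eq_or_lt' with h | h
  · simp [h]
  · have hu' : 0 < u := h.trans_le hu
    have hv' : 0 < v := h.trans_le hv
    rw [Real.log_div h.ne' (by positivity), Real.log_div h.ne' hv'.ne',
      Real.log_mul hu'.ne' hv'.ne']
    ring

/-- `I(A:B) ≤ 1 - 2 P_err`. -/
lemma mutualInfo_le {S : Type*} [Fintype S]
    (p : Bool × S → ℝ) (hp0 : ∀ z, 0 ≤ p z) (hp1 : ∑ z, p z = 1) :
    mutualInfo p ≤ 1 - 2 * ∑ b, min (p (true, b)) (p (false, b)) := by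
  have hl : 0 < Real.log 2 := Real.log_pos one_lt_two
  have hsum : (∑ b, p (true, b)) + ∑ b, p (false, b) = 1 := by
    rw [← hp1, Fintype.sum_prod_type, Fintype.sum_bool]
  have hmul : mutualInfo p * Real.log 2 =
      ∑ a, ∑ b, p (a, b) * Real.log (p (a, b) / ((∑ b', p (a, b')) * (∑ a', p (a', b)))) := by
    rw [mutualInfo, sum_mul]
    refine sum_congr rfl fun a _ => ?_
    rw [sum_mul]
    refine sum_congr rfl fun b _ => ?_
    rw [Real.logb, mul_assoc, div_mul_cancel₀ _ hl.ne']
  have hsplit : ∀ a b,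
      p (a, b) * Real.log (p (a, b) / ((∑ b', p (a, b')) * (∑ a', p (a', b)))) =
        p (a, b) * Real.log (p (a, b) / (∑ a', p (a', b)))
          - p (a, b) * Real.log (∑ b', p (a, b')) := fun a b =>
    mul_log_split (hp0 _)
      (single_le_sum (f := fun b' => p (a, b')) (fun _ _ => hp0 _) (mem_univ b))
      (single_le_sum (f := fun a' => p (a', b)) (fun _ _ => hp0 _) (mem_univ a))
  simp only [hsplit, sum_sub_distrib, ← sum_mul] at hmul
  rw [sum_comm] at hmul
  simp only [Fintype.sum_bool] at hmul
  have hcond := sum_le_sum fun b (_ : b ∈ (univ : Finset S)) =>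
    entropy_term_le (hp0 (true, b)) (hp0 (false, b))
  rw [sum_neg_distrib, ← sum_mul, ← mul_sum] at hcond
  have hent := Real.binEntropy_le_log_two (p := ∑ b, p (true, b))
  rw [Real.binEntropy, ← eq_sub_of_add_eq' hsum, Real.log_inv, Real.log_inv] at hent
  refine le_of_mul_le_mul_right ?_ hl
  linarith

/-- Information ⇒ prediction: for jointly distributed `A ∈ {0,1}`
(here `Bool`) and `B ∈ S` with joint pmf `p`, there is a measurement `M : S → {0,1}`
with `Pr(M(B) = A) ≥ 1/2 + I(A:B)/3`. -/
theorem stmt_11 {S : Type*} [Fintype S]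
    (p : Bool × S → ℝ) (hp0 : ∀ z, 0 ≤ p z) (hp1 : ∑ z, p z = 1) :
    ∃ M : S → Bool,
      1 / 2 + mutualInfo p / 3 ≤
        ∑ z ∈ univ.filter (fun z : Bool × S => M z.2 = z.1), p z := by
  refine ⟨fun b => decide (p (false, b) ≤ p (true, b)), ?_⟩
  have hI := mutualInfo_le p hp0 hp1
  have hsucc : ∑ z ∈ univ.filter (fun z : Bool × S =>
      decide (p (false, z.2) ≤ p (true, z.2)) = z.1), p z =
      ∑ b, max (p (true, b)) (p (false, b)) := by
    rw [sum_filter, Fintype.sum_prod_type, sum_comm]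
    refine sum_congr rfl fun b _ => ?_
    rw [Fintype.sum_bool]
    by_cases h : p (false, b) ≤ p (true, b)
    · simp [h]
    · simp [h, max_eq_right (le_of_not_ge h)]
  have htot : (∑ b, max (p (true, b)) (p (false, b))) +
      ∑ b, min (p (true, b)) (p (false, b)) = 1 := by
    rw [← hp1, Fintype.sum_prod_type, Fintype.sum_bool, ← sum_add_distrib, ← sum_add_distrib]
    exact sum_congr rfl fun b _ => max_add_min _ _
  have hle : ∑ b, min (p (true, b)) (p (false, b)) ≤ ∑ b, max (p (true, b)) (p (false, b)) :=
    sum_le_sum fun b _ => min_le_max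
  rw [hsucc]
  linarith
end

section
/- Let X, A, B be jointly distributed random variables taking values in finite sets, with A taking values in {0,1}. Then there exists a function g of the pair (x,b) into {0,1} such that Pr( g(X,B) = A ) ≥ 1/2 + I(A:B | X)/3. -/
/-!
The predictor is maximum likelihood: `g (x, s)` is a value `a` maximising `p (x, a, s)`. Since
`max u v = (u + v) / 2 + |u - v| / 2`, its success probability is
`1/2 + (∑ x, ∑ s, |p (x, true, s) - p (x, false, s)|) / 2`. So it suffices to bound the mutual
information of a bit with `B` by `∑ s, |q (true, s) - q (false, s)|` (`mutualInfo_le`), which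
even gives the constant `1/2` in place of `1/3`.

For that bound write `I(A:B) = H(A) - H(A|B) ≤ 1 - H(A|B)` and use
`h(t) ≥ 2 min (t, 1 - t)` for the binary entropy function at every value of `B`; the latter follows
from concavity of `t ↦ -t log t` (`mul_log_le`).
-/

open scoped Classical
open Finset

/-- `t log t` lies below its chords over `[0, 1/2]` and `[1/2, 1]`. -/
lemma mul_log_le {t : ℝ} (h0 : 0 ≤ t) (h1 : t ≤ 1) :
    t * Real.log t ≤ -(min t (1 - t)) * Real.log 2 := by
  rcases le_total t (1 / 2) with h | h
  · rw [min_eq_left (by linarith)]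
    rcases h0.eq_or_lt with rfl | hpos
    · simp
    · have : Real.log t ≤ Real.log (1 / 2) := Real.log_le_log hpos h
      rw [one_div, Real.log_inv] at this
      nlinarith
  · rw [min_eq_right (by linarith)]
    have := Real.convexOn_mul_log.2 (show (1 / 2 : ℝ) ∈ Set.Ici 0 by simp)
      (show (1 : ℝ) ∈ Set.Ici 0 by simp)
      (show 0 ≤ 2 * (1 - t) by linarith) (show 0 ≤ 2 * t - 1 by linarith) (by ring)
    simp only [smul_eq_mul, one_div, Real.log_inv, Real.log_one] at this
    have e : 2 * (1 - t) * 2⁻¹ + (2 * t - 1) * 1 = t := by ring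
    rw [e] at this
    linarith

/-- Homogeneous form of `1 - h(t) ≤ |2 t - 1|`, at `t = u / (u + v)`. -/
lemma pair_bound_s12 {u v : ℝ} (hu : 0 ≤ u) (hv : 0 ≤ v) :
    u * Real.logb 2 (2 * (u / (u + v))) + v * Real.logb 2 (2 * (v / (u + v))) ≤ |u - v| := by
  have hl : 0 < Real.log 2 := Real.log_pos (by norm_num)
  rcases (add_nonneg hu hv).eq_or_lt with h | hr
  · have h1 : u = 0 := by linarith
    have h2 : v = 0 := by linarith
    simp [h1, h2]
  obtain ⟨r, hrd⟩ : ∃ r, r = u + v := ⟨_, rfl⟩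
  rw [← hrd] at hr ⊢
  obtain ⟨a, ha⟩ : ∃ a, a = u / r := ⟨_, rfl⟩
  have hua : u = r * a := by rw [ha]; field_simp
  have hvb : v = r * (1 - a) := by rw [mul_sub, ← hua]; linarith
  have ha0 : 0 ≤ a := by rw [ha]; positivity
  have ha1 : a ≤ 1 := by rw [ha, div_le_one hr]; linarith
  have hvr : v / r = 1 - a := by rw [hvb]; field_simp
  rw [← ha, hvr]
  have key : ∀ t : ℝ, t * Real.logb 2 (2 * t) = t + t * Real.log t / Real.log 2 := by
    intro t
    rcases eq_or_ne t 0 with rfl | ht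
    · simp
    · rw [Real.logb, Real.log_mul (by norm_num) ht]
      field_simp
  have b1 : ∀ t : ℝ, 0 ≤ t → t ≤ 1 → t * Real.log t / Real.log 2 ≤ -(min t (1 - t)) := by
    intro t h0 h1
    rw [div_le_iff₀ hl]
    exact mul_log_le h0 h1
  have m1 := b1 a ha0 ha1
  have m2 := b1 (1 - a) (by linarith) (by linarith)
  rw [sub_sub_cancel, min_comm] at m2
  have hmin : 1 - 2 * min a (1 - a) = |a - (1 - a)| := by
    rcases le_total a (1 - a) with h | h
    · rw [min_eq_left h, abs_of_nonpos (by linarith)]; ring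
    · rw [min_eq_right h, abs_of_nonneg (by linarith)]; ring
  have habs : |u - v| = r * |a - (1 - a)| := by
    rw [hua, hvb, ← mul_sub, abs_mul, abs_of_pos hr]
  rw [habs, hua, hvb, mul_assoc, mul_assoc, ← mul_add]
  refine mul_le_mul_of_nonneg_left ?_ hr.le
  rw [key, key, ← hmin]
  linarith

/-- Splitting off the prior `P` from the information density. For `u = 0` both sides vanish. -/
lemma term_split {u r P : ℝ} (hu : 0 ≤ u) (hur : u ≤ r) (huP : u ≤ P) :
    u * Real.logb 2 (u / (P * r)) =
      u * Real.logb 2 (2 * (u / r)) - u * Real.logb 2 (2 * P) := by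
  rcases hu.eq_or_lt with rfl | hpos
  · simp
  · have hr : 0 < r := by linarith
    have hP : 0 < P := by linarith
    rw [← mul_sub, ← Real.logb_div (by positivity) (by positivity)]
    congr 2
    field_simp

/-- Tangent-line bound; summed over both values of a bit it gives `H(A) ≤ 1`. -/
lemma prior_bound {P : ℝ} (hP : 0 ≤ P) :
    (P - 1 / 2) / Real.log 2 ≤ P * Real.logb 2 (2 * P) := by
  have hl : 0 < Real.log 2 := Real.log_pos (by norm_num)
  rw [Real.logb, ← mul_div_assoc]
  refine div_le_div_of_nonneg_right ?_ hl.le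
  rcases hP.eq_or_lt with rfl | hpos
  · norm_num
  · have h := Real.one_sub_inv_le_log_of_pos (x := 2 * P) (by positivity)
    have := mul_le_mul_of_nonneg_left h hP
    have e : P * (1 - (2 * P)⁻¹) = P - 1 / 2 := by field_simp
    linarith

lemma mutualInfo_le_s12 {S : Type*} [Fintype S] (q : Bool × S → ℝ) (h0 : ∀ t, 0 ≤ q t)
    (h1 : ∑ a, ∑ s, q (a, s) = 1) :
    mutualInfo q ≤ ∑ s, |q (true, s) - q (false, s)| := by
  have hle : ∀ a s, q (a, s) ≤ ∑ s', q (a, s') := fun a s =>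
    Finset.single_le_sum (f := fun s' => q (a, s')) (fun i _ => h0 _) (Finset.mem_univ s)
  unfold mutualInfo
  simp only [Fintype.sum_bool] at h1 ⊢
  have e1 : ∀ s, q (true, s) * Real.logb 2
      (q (true, s) / ((∑ s', q (true, s')) * (q (true, s) + q (false, s)))) = _ := fun s =>
    term_split (h0 _) (by linarith [h0 (false, s)]) (hle true s)
  have e2 : ∀ s, q (false, s) * Real.logb 2
      (q (false, s) / ((∑ s', q (false, s')) * (q (true, s) + q (false, s)))) = _ := fun s =>
    term_split (h0 _) (by linarith [h0 (true, s)]) (hle false s)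
  simp only [e1, e2, Finset.sum_sub_distrib, ← Finset.sum_mul]
  have p1 := prior_bound (P := ∑ s, q (true, s)) (Finset.sum_nonneg fun i _ => h0 _)
  have p2 := prior_bound (P := ∑ s, q (false, s)) (Finset.sum_nonneg fun i _ => h0 _)
  have p3 : (∑ s, q (true, s) - 1 / 2) / Real.log 2 + (∑ s, q (false, s) - 1 / 2) / Real.log 2
      = 0 := by
    rw [← add_div, div_eq_zero_iff]
    left
    linarith
  have p4 := Finset.sum_le_sum fun s (_ : s ∈ Finset.univ) =>
    pair_bound_s12 (h0 (true, s)) (h0 (false, s))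
  rw [Finset.sum_add_distrib] at p4
  linarith

/-- Version for an unnormalised joint mass function `q`; when the total mass is `0` the
left-hand side is `0`. -/
lemma weighted_mutualInfo_le {S : Type*} [Fintype S] (q : Bool → S → ℝ) (h0 : ∀ a s, 0 ≤ q a s) :
    (∑ a, ∑ s, q a s) * mutualInfo (fun t : Bool × S => q t.1 t.2 / (∑ a, ∑ s, q a s)) ≤
      ∑ s, |q true s - q false s| := by
  have hw0 : 0 ≤ ∑ a, ∑ s, q a s := Finset.sum_nonneg fun _ _ => Finset.sum_nonneg fun _ _ => h0 _ _
  generalize hw : ∑ a, ∑ s, q a s = w at hw0 ⊢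
  rcases hw0.eq_or_lt with rfl | hpos
  · rw [zero_mul]
    exact Finset.sum_nonneg fun _ _ => abs_nonneg _
  · have h := mutualInfo_le_s12 (fun t : Bool × S => q t.1 t.2 / w)
      (fun t => div_nonneg (h0 _ _) hpos.le)
      (by simp only [← Finset.sum_div, hw]; exact div_self hpos.ne')
    refine (mul_le_mul_of_nonneg_left h hpos.le).trans_eq ?_
    rw [Finset.mul_sum]
    refine Finset.sum_congr rfl fun s _ => ?_
    simp only
    rw [← sub_div, abs_div, abs_of_pos hpos]
    field_simp

/-- for jointly distributed `(X, A, B)` with `A ∈ {0,1}` (here `Bool`)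
and joint pmf `p`, there is a predictor `g : 𝒳 × S → {0,1}` with
`Pr(g(X,B) = A) ≥ 1/2 + I(A:B | X)/3`, where
`I(A:B | X) = E_{x←X}[ I(A^x : B^x) ]` (the conditioned joint pmf being given by
division by `Pr(X = x)`). -/
theorem stmt_12 {X S : Type*} [Fintype X] [Fintype S]
    (p : X × Bool × S → ℝ) (hp0 : ∀ t, 0 ≤ p t) (hp1 : ∑ t, p t = 1) :
    ∃ g : X × S → Bool,
      1 / 2 + (∑ x, (∑ a, ∑ s, p (x, a, s)) *
          mutualInfo (fun q : Bool × S => p (x, q.1, q.2) / (∑ a, ∑ s, p (x, a, s)))) / 3 ≤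
        ∑ t ∈ univ.filter (fun t : X × Bool × S => g (t.1, t.2.2) = t.2.1), p t := by
  refine ⟨fun y => decide (p (y.1, false, y.2) ≤ p (y.1, true, y.2)), ?_⟩
  have hI := Finset.sum_le_sum fun x (_ : x ∈ (Finset.univ : Finset X)) =>
    weighted_mutualInfo_le (fun a s => p (x, a, s)) fun a s => hp0 _
  have hD : 0 ≤ ∑ x, ∑ s, |p (x, true, s) - p (x, false, s)| :=
    Finset.sum_nonneg fun _ _ => Finset.sum_nonneg fun _ _ => abs_nonneg _
  have hsum : ∑ x, ∑ s, (p (x, true, s) + p (x, false, s)) = 1 := by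
    rw [← hp1, Fintype.sum_prod_type]
    refine Finset.sum_congr rfl fun x _ => ?_
    rw [Fintype.sum_prod_type, Fintype.sum_bool, Finset.sum_add_distrib]
  have hg : ∑ t ∈ univ.filter (fun t : X × Bool × S =>
      decide (p (t.1, false, t.2.2) ≤ p (t.1, true, t.2.2)) = t.2.1), p t =
      ∑ x, ∑ s, ((p (x, true, s) + p (x, false, s)) / 2
        + |p (x, true, s) - p (x, false, s)| / 2) := by
    rw [Finset.sum_filter, Fintype.sum_prod_type]
    refine Finset.sum_congr rfl fun x _ => ?_
    rw [Fintype.sum_prod_type, Fintype.sum_bool, ← Finset.sum_add_distrib]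
    refine Finset.sum_congr rfl fun s _ => ?_
    by_cases h : p (x, false, s) ≤ p (x, true, s)
    · rw [abs_of_nonneg (by linarith)]
      simp [h]
      ring
    · rw [abs_of_neg (by linarith)]
      simp [h]
      ring
  simp only [Finset.sum_add_distrib (f := fun s => _ / (2 : ℝ)), ← Finset.sum_div, hsum] at hg
  refine le_of_le_of_eq ?_ hg.symm
  linarith
end

section
/- Let 𝒳 and 𝒴 be finite sets, F : 𝒳×𝒴 → {0,1} a function, μ a probability distribution on 𝒳×𝒴, ε ∈ (0,1/2), and c ≥ 1 an integer. Let (X₁,Y₁),…,(X_c,Y_c) be i.i.d. pairs each distributed according to μ, let Lᵢ = F(Xᵢ,Yᵢ), X = (X₁,…,X_c), and L = (L₁,…,L_c). Then at least one of the following holds: (a) there exists a function g : 𝒳 → {0,1} such that Pr_{(x,y)←μ}( g(x) ≠ F(x,y) ) ≤ 1/2 − ε; or (b) Δ( (X,L), X ⊗ W^{⊗c} ) ≤ c·ε, where W^{⊗c} denotes the uniform distribution on {0,1}^c and X ⊗ W^{⊗c} the product of the distribution of X with it. -/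
open scoped Classical
open Finset

/-!
Write `p x b` for the probability that `X₁ = x` and `L₁ = b`. The majority guess
`g x = argmax_b p x b` errs with probability
`∑ x, min (p x 0) (p x 1) = 1/2 - (1/2) ∑ x, |p x 0 - p x 1|`, and the last sum, halved, is the
total variation distance between `(X₁, L₁)` and `X₁ ⊗ W`. So if (a) fails for this `g`, that
single-coordinate distance is less than `ε`. Total variation distance is subadditive over product
distributions (`sum_abs_prod_sub_prod_le`, a hybrid argument), so `c` coordinates cost at most
`c * ε`.
-/

/-- Subadditivity of total variation distance for `n`-fold powers of two distributions on `S`,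
without the factor `1/2`. Coordinates are exchanged one at a time. -/
theorem sum_abs_prod_sub_prod_le {S : Type*} [Fintype S] (P Q : S → ℝ)
    (hP : ∀ s, 0 ≤ P s) (hQ : ∀ s, 0 ≤ Q s) (hP1 : ∑ s, P s = 1) (hQ1 : ∑ s, Q s = 1) (n : ℕ) :
    ∑ s : Fin n → S, |∏ i, P (s i) - ∏ i, Q (s i)| ≤ n * ∑ s, |P s - Q s| := by
  induction n with
  | zero => simp
  | succ n ih =>
    have hQn : ∑ t : Fin n → S, ∏ i, Q (t i) = 1 := by
      rw [← Fintype.sum_pow, hQ1, one_pow]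
    rw [← (Fin.consEquiv (fun _ : Fin (n + 1) => S)).sum_comp, Fintype.sum_prod_type]
    simp only [Fin.consEquiv_apply, Fin.prod_univ_succ, Fin.cons_zero, Fin.cons_succ]
    calc ∑ a, ∑ t : Fin n → S, |P a * ∏ i, P (t i) - Q a * ∏ i, Q (t i)|
        ≤ ∑ a, ∑ t : Fin n → S,
            (P a * |∏ i, P (t i) - ∏ i, Q (t i)| + |P a - Q a| * ∏ i, Q (t i)) := by
          refine sum_le_sum fun a _ => sum_le_sum fun t _ => ?_
          have hQt : 0 ≤ ∏ i, Q (t i) := prod_nonneg fun i _ => hQ _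
          have h : P a * ∏ i, P (t i) - Q a * ∏ i, Q (t i)
              = P a * (∏ i, P (t i) - ∏ i, Q (t i)) + (P a - Q a) * ∏ i, Q (t i) := by ring
          rw [h]
          refine (abs_add_le _ _).trans_eq ?_
          rw [abs_mul, abs_mul, abs_of_nonneg (hP a), abs_of_nonneg hQt]
      _ = ∑ t : Fin n → S, |∏ i, P (t i) - ∏ i, Q (t i)| + ∑ a, |P a - Q a| := by
          simp only [sum_add_distrib, ← mul_sum, ← sum_mul, hQn, hP1, one_mul, mul_one]
      _ ≤ (n + 1 : ℕ) * ∑ s, |P s - Q s| := by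
          push_cast
          linarith

/-- biased distribution dichotomy: let `F : 𝒳×𝒴 → {0,1}` (here `Bool`),
`μ` a distribution on `𝒳×𝒴`, `ε ∈ (0,1/2)` and `c ≥ 1`.  With `(Xᵢ,Yᵢ) ~ μ` i.i.d.
and `Lᵢ = F(Xᵢ,Yᵢ)`, either
(a) there is a guessing function `g : 𝒳 → {0,1}` with
    `Pr_{(x,y)←μ}(g(x) ≠ F(x,y)) ≤ 1/2 − ε`, or
(b) `Δ((X,L), X ⊗ W^{⊗c}) ≤ c·ε` where `W^{⊗c}` is uniform on `{0,1}^c`.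
The joint pmf of `(X,L)` at `(x,ℓ)` is `∏ i, Pr_{(a,y)←μ}(a = xᵢ ∧ F(a,y) = ℓᵢ)`,
and the product distribution `X ⊗ W^{⊗c}` has pmf `∏ i, μ_X(xᵢ)·(1/2)`. -/
theorem stmt_13 {X Y : Type*} [Fintype X] [Fintype Y]
    (F : X × Y → Bool) (μ : X × Y → ℝ)
    (hμ0 : ∀ z, 0 ≤ μ z) (hμ1 : ∑ z, μ z = 1)
    (ε : ℝ) (hε0 : 0 < ε) (hε2 : ε < 1 / 2) (c : ℕ) (hc : 1 ≤ c) :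
    (∃ g : X → Bool, ∑ z ∈ univ.filter (fun z : X × Y => g z.1 ≠ F z), μ z ≤ 1 / 2 - ε) ∨
      (1 / 2) * ∑ x : Fin c → X, ∑ l : Fin c → Bool,
          |(∏ i, ∑ y ∈ univ.filter (fun y : Y => F (x i, y) = l i), μ (x i, y)) -
            ∏ i, (∑ y, μ (x i, y)) * (1 / 2)| ≤ c * ε := by
  set p : X → Bool → ℝ := fun x b => ∑ y ∈ univ.filter (fun y : Y => F (x, y) = b), μ (x, y)
    with hp
  have hp0 : ∀ x b, 0 ≤ p x b := fun x b => sum_nonneg fun y _ => hμ0 _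
  have hpadd : ∀ x, ∑ y, μ (x, y) = p x true + p x false := by
    intro x
    simp only [hp, sum_filter, ← sum_add_distrib]
    refine sum_congr rfl fun y _ => ?_
    cases F (x, y) <;> simp
  have hp1 : ∑ x, (p x true + p x false) = 1 := by
    rw [← hμ1, Fintype.sum_prod_type]
    exact sum_congr rfl fun x _ => (hpadd x).symm
  by_cases ha : ∃ g : X → Bool,
      ∑ z ∈ univ.filter (fun z : X × Y => g z.1 ≠ F z), μ z ≤ 1 / 2 - ε
  · exact Or.inl ha
  right
  push Not at ha
  -- The majority guess errs on `x` with weight `min (p x true) (p x false)`.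
  have herr := ha fun x => decide (p x false ≤ p x true)
  have hmin : ∑ z ∈ univ.filter
        (fun z : X × Y => (fun x => decide (p x false ≤ p x true)) z.1 ≠ F z), μ z
      = ∑ x, ((p x true + p x false) * (1 / 2) - 1 / 2 * |p x true - p x false|) := by
    rw [sum_filter, Fintype.sum_prod_type]
    refine sum_congr rfl fun x _ => ?_
    have h : ∀ b : Bool, (∑ y, if b ≠ F (x, y) then μ (x, y) else 0) = p x (!b) := by
      intro b
      simp only [hp, sum_filter]
      refine sum_congr rfl fun y _ => ?_
      cases b <;> cases F (x, y) <;> simp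
    refine (h (decide (p x false ≤ p x true))).trans ?_
    by_cases hx : p x false ≤ p x true
    · rw [abs_of_nonneg (sub_nonneg.2 hx)]
      simp only [hx, decide_true, Bool.not_true]
      ring
    · rw [abs_of_neg (by linarith)]
      simp only [hx, decide_false, Bool.not_false]
      ring
  have hbias : ∑ x, |p x true - p x false| < 2 * ε := by
    have h := lt_of_lt_of_eq herr hmin
    rw [sum_sub_distrib, ← sum_mul, ← mul_sum, hp1] at h
    linarith
  have hyb := sum_abs_prod_sub_prod_le (S := X × Bool) (fun s => p s.1 s.2)
    (fun s => (p s.1 true + p s.1 false) * (1 / 2)) (fun s => hp0 _ _)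
    (fun s => mul_nonneg (add_nonneg (hp0 _ _) (hp0 _ _)) (by norm_num))
    (by rw [Fintype.sum_prod_type, ← hp1]; simp)
    (by
      refine Eq.trans ?_ hp1
      rw [Fintype.sum_prod_type]
      refine sum_congr rfl fun x _ => ?_
      simp only [Fintype.sum_bool]
      ring) c
  have hone : ∑ s : X × Bool, |p s.1 s.2 - (p s.1 true + p s.1 false) * (1 / 2)|
      = ∑ x, |p x true - p x false| := by
    rw [Fintype.sum_prod_type]
    refine sum_congr rfl fun x _ => ?_
    have h1 : p x true - (p x true + p x false) * (1 / 2)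
        = (p x true - p x false) * (1 / 2) := by ring
    have h2 : p x false - (p x true + p x false) * (1 / 2)
        = -((p x true - p x false) * (1 / 2)) := by ring
    simp only [Fintype.sum_bool]
    rw [h1, h2, abs_neg, abs_mul, abs_of_pos (by norm_num : (0 : ℝ) < 1 / 2)]
    ring
  rw [hone, ← (Equiv.arrowProdEquivProdArrow (Fin c) (fun _ => X) (fun _ => Bool)).symm.sum_comp,
    Fintype.sum_prod_type] at hyb
  simp only [hpadd]
  have hc0 : (0 : ℝ) ≤ c := Nat.cast_nonneg c
  calc _ ≤ 1 / 2 * (c * ∑ x, |p x true - p x false|) :=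
        mul_le_mul_of_nonneg_left hyb (by norm_num)
    _ ≤ 1 / 2 * (c * (2 * ε)) := by gcongr
    _ = c * ε := by ring
end

section
/- Fix n ≥ 2 and for i ∈ {0,1,2} let Dᵢ be the uniform distribution on the strings in {0,1}^n of Hamming weight exactly i. Then for every conjunction C on {0,1}^n of width w = |C|, one has max(0, (n/2)·(⟨D₁,C⟩ − ⟨D₀,C⟩)) + (n/2)·(⟨D₁,C⟩ − ⟨D₂,C⟩) ≤ w·⟨D₁,C⟩, where ⟨P,C⟩ = Σ_{x∈{0,1}^n} P(x)·C(x) is the probability that C accepts a sample from P. (This is the feasibility condition for v=1 of the two-sided (n/2, n) junta certificate for OR_n given by Ψ₁ = (n/2)(D₁−D₀), Ψ̂₁ = (n/2)(D₁−D₂).) -/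
/-!
A conjunction with `p` positive literals and width `w` accepts a string of weight `k` exactly when
the support is the set of the `p` positively occurring variables together with `k - p` of the
`n - w` variables that do not occur. Hence `⟨D_k, C⟩ = (n-w choose k-p) / (n choose k)` for `p ≤ k`,
and `0` for `k < p` (`accProb_Dwt`, `accProb_Dwt_of_lt`). The inequality then splits by `p`:

* `p = 0`: `⟨D₁,C⟩ ≤ ⟨D₀,C⟩ = 1`, so the maximum vanishes, and
  `⟨D₁,C⟩ - ⟨D₂,C⟩ = ⟨D₁,C⟩ · w / (n-1)` with `(n/2) / (n-1) ≤ 1`;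
* `p = 1`: the left side is `(w-1)/(n-1)`, which is at most `w/n` since `w ≤ n`;
* `p ≥ 2`: `⟨D₀,C⟩ = ⟨D₁,C⟩ = 0`, so the left side is `≤ 0` and the right side is `0`.
-/

open scoped Classical
open Finset

/-- A conjunction on `{0,1}^n` is specified by a partial assignment
`σ : Fin n → Option Bool` (literal `xᵢ` if `σ i = some true`, literal `¬xᵢ` if
`σ i = some false`, no literal on `i` if `σ i = none`).  It accepts `x` iff every
literal is satisfied. -/
def ConjAccepts {n : ℕ} (σ : Fin n → Option Bool) (x : Fin n → Bool) : Prop :=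
  ∀ i b, σ i = some b → x i = b

/-- The width `|C|` of the conjunction: the number of literals. -/
noncomputable def conjWidth {n : ℕ} (σ : Fin n → Option Bool) : ℕ :=
  (Finset.univ.filter (fun i => (σ i).isSome)).card

/-- `⟨P,C⟩ = Σ_x P(x)·C(x)`: the probability that the conjunction `σ` accepts a
sample from `P`. -/
noncomputable def accProb {n : ℕ} (P : (Fin n → Bool) → ℝ) (σ : Fin n → Option Bool) : ℝ :=
  ∑ x ∈ Finset.univ.filter (ConjAccepts σ), P x

/-- `Dwt n k`: the uniform distribution on `n`-bit strings of Hamming weight exactly `k`. -/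
noncomputable def Dwt (n k : ℕ) : (Fin n → Bool) → ℝ := fun x =>
  if (Finset.univ.filter (fun i => x i = true)).card = k then (1 : ℝ) / (n.choose k) else 0

/-- The variables occurring as positive literals of the conjunction. -/
noncomputable def posVars {n : ℕ} (σ : Fin n → Option Bool) : Finset (Fin n) :=
  univ.filter (fun i => σ i = some true)

/-- The variables not occurring in the conjunction. -/
noncomputable def freeVars {n : ℕ} (σ : Fin n → Option Bool) : Finset (Fin n) :=
  univ.filter (fun i => σ i = none)

lemma card_freeVars_add_conjWidth {n : ℕ} (σ : Fin n → Option Bool) :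
    (freeVars σ).card + conjWidth σ = n := by
  have h := Finset.card_filter_add_card_filter_not (s := (univ : Finset (Fin n)))
    (fun i => σ i = none)
  have h2 : (univ.filter (fun i => ¬ σ i = none)) = univ.filter (fun i => (σ i).isSome) := by
    ext i
    simp [Option.isSome_iff_ne_none]
  rw [h2, card_univ, Fintype.card_fin] at h
  exact h

lemma card_posVars_le_conjWidth {n : ℕ} (σ : Fin n → Option Bool) :
    (posVars σ).card ≤ conjWidth σ := by
  refine card_le_card fun i hi => ?_
  simp only [posVars, mem_filter, mem_univ, true_and] at hi ⊢
  simp [hi]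

lemma disjoint_posVars_freeVars {n : ℕ} (σ : Fin n → Option Bool) :
    Disjoint (posVars σ) (freeVars σ) := by
  rw [Finset.disjoint_left]
  intro i hi hj
  simp only [posVars, freeVars, mem_filter, mem_univ, true_and] at hi hj
  simp [hi] at hj

/-- The support of an accepted string consists of the positive variables and some free ones. -/
lemma support_eq {n : ℕ} (σ : Fin n → Option Bool) (x : Fin n → Bool) (hx : ConjAccepts σ x) :
    univ.filter (fun i => x i = true) =
      posVars σ ∪ (freeVars σ).filter (fun i => x i = true) := by
  ext i
  simp only [posVars, freeVars, mem_filter, mem_univ, true_and, mem_union]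
  rcases h : σ i with _ | b
  · simp
  · have := hx i b h
    cases b <;> simp [this]

lemma card_support {n : ℕ} (σ : Fin n → Option Bool) (x : Fin n → Bool) (hx : ConjAccepts σ x) :
    (univ.filter (fun i => x i = true)).card =
      (posVars σ).card + ((freeVars σ).filter (fun i => x i = true)).card := by
  rw [support_eq σ x hx, card_union_of_disjoint]
  exact (disjoint_posVars_freeVars σ).mono_right (filter_subset _ _)

lemma accProb_Dwt_eq_card {n : ℕ} (σ : Fin n → Option Bool) (k : ℕ) :
    accProb (Dwt n k) σ =
      ((univ.filter (fun x => ConjAccepts σ x ∧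
        (univ.filter (fun i => x i = true)).card = k)).card : ℝ) / (n.choose k) := by
  unfold accProb Dwt
  rw [← sum_filter, filter_filter, sum_const, nsmul_eq_mul]
  ring

lemma accProb_Dwt_of_lt {n : ℕ} (σ : Fin n → Option Bool) (k : ℕ) (h : k < (posVars σ).card) :
    accProb (Dwt n k) σ = 0 := by
  rw [accProb_Dwt_eq_card, filter_false_of_mem]
  · simp
  · rintro x - ⟨hx, hk⟩
    have := card_support σ x hx
    omega

lemma accProb_Dwt {n : ℕ} (σ : Fin n → Option Bool) (k : ℕ) (h : (posVars σ).card ≤ k) :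
    accProb (Dwt n k) σ =
      ((freeVars σ).card.choose (k - (posVars σ).card) : ℝ) / (n.choose k) := by
  rw [accProb_Dwt_eq_card]
  congr 2
  rw [← card_powersetCard]
  refine card_bij' (fun x _ => (freeVars σ).filter (fun i => x i = true))
    (fun T _ i => decide (i ∈ posVars σ ∪ T)) ?_ ?_ ?_ ?_
  · intro x hx
    simp only [mem_filter, mem_univ, true_and] at hx
    have := card_support σ x hx.1
    rw [mem_powersetCard]
    exact ⟨filter_subset _ _, by omega⟩
  · intro T hT
    rw [mem_powersetCard] at hT
    simp only [mem_filter, mem_univ, true_and, decide_eq_true_eq]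
    refine ⟨fun i b hb => ?_, ?_⟩
    · have hi : i ∉ T := fun hi => by
        have := hT.1 hi
        simp [freeVars, hb] at this
      cases b <;> simp [posVars, hb, hi]
    · rw [filter_univ_mem, card_union_of_disjoint, hT.2]
      · omega
      · exact (disjoint_posVars_freeVars σ).mono_right hT.1
  · intro x hx
    simp only [mem_filter, mem_univ, true_and] at hx
    funext i
    rw [← support_eq σ x hx.1]
    simp
  · intro T hT
    rw [mem_powersetCard] at hT
    ext i
    have hd : i ∈ posVars σ → i ∉ freeVars σ := fun h =>
      Finset.disjoint_left.mp (disjoint_posVars_freeVars σ) h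
    have hs : i ∈ T → i ∈ freeVars σ := fun h => hT.1 h
    simp only [mem_filter, decide_eq_true_eq, mem_union]
    tauto

/-- feasibility for `v = 1` of the two-sided `(n/2, n)` junta
certificate for `OR_n`: for `n ≥ 2` and every conjunction `C` of width `w`,
`max 0 ((n/2)(⟨D₁,C⟩ − ⟨D₀,C⟩)) + (n/2)(⟨D₁,C⟩ − ⟨D₂,C⟩) ≤ w·⟨D₁,C⟩`. -/
theorem stmt_14 (n : ℕ) (hn : 2 ≤ n) (σ : Fin n → Option Bool) :
    max 0 (((n : ℝ) / 2) * (accProb (Dwt n 1) σ - accProb (Dwt n 0) σ)) +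
        ((n : ℝ) / 2) * (accProb (Dwt n 1) σ - accProb (Dwt n 2) σ) ≤
      (conjWidth σ : ℝ) * accProb (Dwt n 1) σ := by
  have hmw := card_freeVars_add_conjWidth σ
  have hpw := card_posVars_le_conjWidth σ
  have e0 := accProb_Dwt σ 0
  have e1 := accProb_Dwt σ 1
  have e2 := accProb_Dwt σ 2
  have z0 := accProb_Dwt_of_lt σ 0
  have z1 := accProb_Dwt_of_lt σ 1
  generalize (posVars σ).card = p at *
  generalize (freeVars σ).card = m at *
  generalize conjWidth σ = w at *
  have hn' : (2 : ℝ) ≤ n := by exact_mod_cast hn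
  have hn1 : (0 : ℝ) < n - 1 := by linarith
  have hn0 : (0 : ℝ) < n := by linarith
  have hw : (w : ℝ) = n - m := by
    rw [← hmw]
    push_cast
    ring
  have hm0 : (0 : ℝ) ≤ m := Nat.cast_nonneg m
  have hw0 : (0 : ℝ) ≤ w := Nat.cast_nonneg w
  rcases Nat.lt_or_ge 1 p with hp | hp
  · have hnonneg : 0 ≤ accProb (Dwt n 2) σ := by
      rw [accProb_Dwt_eq_card]
      positivity
    rw [z0 (by omega), z1 hp]
    have : 0 ≤ (n : ℝ) / 2 * accProb (Dwt n 2) σ := by positivity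
    simp only [sub_self, mul_zero, max_self]
    linarith
  · interval_cases p
    · rw [e0 le_rfl, e1 (by omega), e2 (by omega)]
      simp only [Nat.sub_zero, Nat.choose_one_right, Nat.choose_zero_right, Nat.cast_choose_two,
        Nat.cast_one, div_one]
      have hle : (m : ℝ) / n - 1 ≤ 0 := by
        rw [sub_nonpos, div_le_one hn0]
        linarith
      rw [max_eq_left (mul_nonpos_of_nonneg_of_nonpos (by positivity) hle), zero_add, hw]
      have key : ((n : ℝ) - m) * (m / n) -
          (n : ℝ) / 2 * (m / n - m * (m - 1) / 2 / (n * (n - 1) / 2)) =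
          (n - m) * m * (n - 2) / (2 * n * (n - 1)) := by
        field_simp
        ring
      have : 0 ≤ ((n : ℝ) - m) * m * (n - 2) / (2 * n * (n - 1)) := by
        rw [← hw]
        have : (0 : ℝ) ≤ n - 2 := by linarith
        positivity
      linarith
    · rw [z0 (by omega), e1 le_rfl, e2 (by omega)]
      simp only [Nat.choose_one_right, Nat.choose_zero_right, Nat.cast_choose_two, Nat.cast_one,
        Nat.sub_self, Nat.add_one_sub_one, sub_zero]
      rw [max_eq_right (by positivity), hw]
      have key : ((n : ℝ) - m) * (1 / n) - ((n : ℝ) / 2 * (1 / n) +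
          (n : ℝ) / 2 * (1 / n - m / (n * (n - 1) / 2))) = m / (n * (n - 1)) := by
        field_simp
        ring
      have : 0 ≤ (m : ℝ) / (n * (n - 1)) := by positivity
      linarith
end

section
/- Fix n ≥ 1 and let D₀ and D₁ be the uniform distributions on the strings in {0,1}^n of Hamming weight exactly 0 and exactly 1, respectively. Then for every conjunction C on {0,1}^n of width w = |C|, one has max(0, (n/2)·(⟨D₀,C⟩ − ⟨D₁,C⟩)) ≤ w·⟨D₀,C⟩, where ⟨P,C⟩ = Σ_{x∈{0,1}^n} P(x)·C(x). (This is the feasibility condition for v=0 of the two-sided (n/2, n) junta certificate for OR_n given by Ψ₀ = (n/2)(D₀−D₁), Ψ̂₀ = 0.) -/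
/-!
`D₀` is the point mass at the zero string, so `⟨D₀,C⟩` is `1` if `C` accepts the zero string and `0`
otherwise. In the second case the left-hand side is `0`, since `⟨D₁,C⟩ ≥ 0`. In the first case all
literals of `C` are negative, so `C` accepts the unit string `eᵢ` for each of the `n - w` indices `i`
that carry no literal. Hence `⟨D₁,C⟩ ≥ (n - w) / n`, and `(n/2)(1 - ⟨D₁,C⟩) ≤ w/2 ≤ w`.
-/

open scoped Classical
open Finset

lemma Dwt_nonneg (n k : ℕ) (x : Fin n → Bool) : 0 ≤ Dwt n k x := by
  unfold Dwt
  split_ifs <;> positivity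

lemma accProb_Dwt_nonneg {n : ℕ} (k : ℕ) (σ : Fin n → Option Bool) :
    0 ≤ accProb (Dwt n k) σ :=
  Finset.sum_nonneg fun x _ => Dwt_nonneg n k x

lemma Dwt_zero (n : ℕ) (x : Fin n → Bool) :
    Dwt n 0 x = if x = (fun _ => false) then 1 else 0 := by
  simp [Dwt, Finset.filter_eq_empty_iff, funext_iff]

lemma accProb_Dwt_zero {n : ℕ} (σ : Fin n → Option Bool) :
    accProb (Dwt n 0) σ = if ConjAccepts σ (fun _ => false) then 1 else 0 := by
  simp [accProb, Dwt_zero]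

/-- The string of Hamming weight one whose only `1` is at position `i`. -/
def unitString {n : ℕ} (i : Fin n) : Fin n → Bool := fun j => decide (j = i)

lemma unitString_injective {n : ℕ} : Function.Injective (unitString (n := n)) := by
  intro i j h
  simpa [unitString] using congrFun h i

lemma Dwt_one_unitString {n : ℕ} (i : Fin n) : Dwt n 1 (unitString i) = 1 / n := by
  simp [Dwt, unitString, Finset.filter_eq']

/-- A conjunction accepting the zero string also accepts each unit string at an index that carries
no literal. -/
lemma conjAccepts_unitString {n : ℕ} {σ : Fin n → Option Bool}
    (h : ConjAccepts σ (fun _ => false)) {i : Fin n} (hi : ¬ (σ i).isSome) :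
    ConjAccepts σ (unitString i) := by
  intro j b hj
  have hji : j ≠ i := by
    rintro rfl
    simp [hj] at hi
  simpa [unitString, hji] using h j b hj

lemma le_accProb_Dwt_one {n : ℕ} {σ : Fin n → Option Bool}
    (h : ConjAccepts σ (fun _ => false)) :
    ((n : ℝ) - conjWidth σ) * (1 / n) ≤ accProb (Dwt n 1) σ := by
  set F : Finset (Fin n) := Finset.univ.filter (fun i => ¬ (σ i).isSome) with hF
  have hcard : (conjWidth σ : ℝ) + F.card = n := by
    have := Finset.card_filter_add_card_filter_not (s := (Finset.univ : Finset (Fin n)))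
      (fun i => ((σ i).isSome : Prop))
    rw [Finset.card_univ, Fintype.card_fin] at this
    unfold conjWidth
    exact_mod_cast this
  calc ((n : ℝ) - conjWidth σ) * (1 / n) = ∑ i ∈ F, Dwt n 1 (unitString i) := by
        simp only [Dwt_one_unitString, Finset.sum_const, nsmul_eq_mul]
        rw [← hcard]
        ring
    _ = ∑ x ∈ F.image unitString, Dwt n 1 x :=
        (Finset.sum_image unitString_injective.injOn).symm
    _ ≤ accProb (Dwt n 1) σ := by
        refine Finset.sum_le_sum_of_subset_of_nonneg ?_ fun x _ _ => Dwt_nonneg n 1 x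
        intro x hx
        obtain ⟨i, hi, rfl⟩ := Finset.mem_image.1 hx
        exact Finset.mem_filter.2
          ⟨Finset.mem_univ _, conjAccepts_unitString h (Finset.mem_filter.1 hi).2⟩

/-- feasibility for `v = 0` of the two-sided `(n/2, n)` junta
certificate for `OR_n`: for `n ≥ 1` and every conjunction `C` of width `w`,
`max 0 ((n/2)(⟨D₀,C⟩ − ⟨D₁,C⟩)) ≤ w·⟨D₀,C⟩`. -/
theorem stmt_15 (n : ℕ) (hn : 1 ≤ n) (σ : Fin n → Option Bool) :
    max 0 (((n : ℝ) / 2) * (accProb (Dwt n 0) σ - accProb (Dwt n 1) σ)) ≤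
      (conjWidth σ : ℝ) * accProb (Dwt n 0) σ := by
  have hn0 : (0 : ℝ) < n := by exact_mod_cast hn
  have hw : (0 : ℝ) ≤ conjWidth σ := by positivity
  refine max_le (mul_nonneg hw (accProb_Dwt_nonneg 0 σ)) ?_
  by_cases h : ConjAccepts σ (fun _ => false)
  · have h1 := le_accProb_Dwt_one h
    rw [accProb_Dwt_zero, if_pos h]
    calc (n : ℝ) / 2 * (1 - accProb (Dwt n 1) σ)
        ≤ (n : ℝ) / 2 * (1 - ((n : ℝ) - conjWidth σ) * (1 / n)) := by gcongr
      _ = (conjWidth σ : ℝ) / 2 := by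
          field_simp
          ring
      _ ≤ (conjWidth σ : ℝ) * 1 := by linarith
  · rw [accProb_Dwt_zero, if_neg h, zero_sub, mul_zero]
    exact mul_nonpos_of_nonneg_of_nonpos (by positivity)
      (neg_nonpos.2 (accProb_Dwt_nonneg 1 σ))
end

section
/- Let d ≥ 2, n = 2^d, and let D₀ be the following probability distribution on functions z : ℤ₂^d → {0,1}: sample a nonzero y ∈ ℤ₂^d uniformly at random; the map x ↦ x+y partitions ℤ₂^d into n/2 pairs {x, x+y}; independently for each pair choose a uniform bit b ∈ {0,1} and set z(x) = z(x+y) = b. Then for every conjunction C on the n input bits (z(x))_{x∈ℤ₂^d} of width w = |C|, one has Pr_{z←D₀}( C(z) = 1 ) ≥ (1 − binom(w,2)/(n−1)) · 2^{−w}. -/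
open scoped Classical
open Finset

/-!
Fix a nonzero shift `y`. If no two of the points `pts j` differ by `y`, the points lie in `w`
different pairs `{x, x + y}`, so the `w` prescribed bits are independent and uniform and the
conjunction accepts with probability exactly `2^{-w}`. Each of the `binom(w,2)` pairs of points
excludes at most the one shift `pts i + pts j`, so at least `n - 1 - binom(w,2)` of the `n - 1`
shifts are of this kind; the contribution of the others is nonnegative.

The probability for a single good shift is bounded below by two counting lemmas, for which
inequalities suffice: there are at least `2^(n/2)` functions invariant under `y`
(`two_pow_le_card_inv`), and at least a `2^{-w}` fraction of them satisfies the conjunction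
(`card_inv_le`).
-/

/-- Functions invariant under translation by `y`. -/
def invFns (d : ℕ) (y : Fin d → ZMod 2) : Finset ((Fin d → ZMod 2) → Bool) :=
  Finset.univ.filter (fun z => ∀ x, z (x + y) = z x)

lemma add_add_self_cube {d : ℕ} (x y : Fin d → ZMod 2) : x + y + y = x := by
  funext i
  simp [add_assoc, CharTwo.add_self_eq_zero]

/-- An arbitrary function is encoded by a pair of invariant ones: choose a coordinate `i` with
`y i = 1` and extend its restrictions to the two half-cubes `x i = 0` and `x i = 1` invariantly.
Hence `2^n ≤ |invFns d y|^2`. -/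
lemma two_pow_le_card_inv {d : ℕ} (hd : 1 ≤ d) (y : Fin d → ZMod 2) (hy : y ≠ 0) :
    2 ^ (2 ^ (d - 1)) ≤ (invFns d y).card := by
  obtain ⟨i, hi⟩ := Function.ne_iff.mp hy
  have hi1 : y i = 1 := by
    have key : ∀ a : ZMod 2, a ≠ 0 → a = 1 := by decide
    exact key _ hi
  have flip : ∀ a : ZMod 2, (a + 1 = 0 ↔ ¬ a = 0) := by decide
  let ext0 : ((Fin d → ZMod 2) → Bool) → ((Fin d → ZMod 2) → Bool) :=
    fun z x => if x i = 0 then z x else z (x + y)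
  let ext1 : ((Fin d → ZMod 2) → Bool) → ((Fin d → ZMod 2) → Bool) :=
    fun z x => if x i = 0 then z (x + y) else z x
  have h0 : ∀ z, ext0 z ∈ invFns d y := by
    intro z
    simp only [invFns, mem_filter, mem_univ, true_and]
    intro x
    by_cases h : x i = 0 <;> simp [ext0, h, hi1, flip, add_add_self_cube]
  have h1 : ∀ z, ext1 z ∈ invFns d y := by
    intro z
    simp only [invFns, mem_filter, mem_univ, true_and]
    intro x
    by_cases h : x i = 0 <;> simp [ext1, h, hi1, flip, add_add_self_cube]
  have hcard : (Finset.univ : Finset ((Fin d → ZMod 2) → Bool)).card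
      ≤ ((invFns d y) ×ˢ (invFns d y)).card := by
    apply Finset.card_le_card_of_injOn (fun z => (ext0 z, ext1 z))
    · intro z _
      simp [h0, h1]
    · intro z _ z' _ h
      obtain ⟨ha, hb⟩ := Prod.mk.inj h
      funext x
      by_cases hx : x i = 0
      · simpa [ext0, hx] using congrFun ha x
      · simpa [ext1, hx] using congrFun hb x
  rw [Finset.card_product] at hcard
  have hn : (Finset.univ : Finset ((Fin d → ZMod 2) → Bool)).card
      = 2 ^ (2 ^ (d - 1)) * 2 ^ (2 ^ (d - 1)) := by
    obtain ⟨e, rfl⟩ : ∃ e, d = e + 1 := ⟨d - 1, by omega⟩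
    simp only [Finset.card_univ, Fintype.card_fun, Fintype.card_bool, ZMod.card, Fintype.card_fin,
      Nat.add_sub_cancel]
    rw [← pow_add, pow_succ 2 e, mul_two]
  rw [hn] at hcard
  exact Nat.mul_self_le_mul_self_iff.mp hcard

/-- If no two points differ by `y`, any values at the points are attained by an invariant function.
Adding such functions (bitwise) moves every invariant function into the set of those satisfying the
conjunction, and the move is determined by the `w` values at the points. -/
lemma card_inv_le {d w : ℕ} (pts : Fin w → (Fin d → ZMod 2)) (hinj : Function.Injective pts)
    (bits : Fin w → Bool) (y : Fin d → ZMod 2) (hy : ∀ j k, pts j ≠ pts k + y) :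
    (invFns d y).card ≤
      ((invFns d y).filter (fun z => ∀ j, z (pts j) = bits j)).card * 2 ^ w := by
  let u : (Fin w → Bool) → ((Fin d → ZMod 2) → Bool) :=
    fun c x => decide (∃ j, (x = pts j ∨ x = pts j + y) ∧ c j = true)
  have hu : ∀ c x, u c (x + y) = u c x := by
    intro c x
    have e1 : ∀ j, x + y = pts j ↔ x = pts j + y := fun j =>
      ⟨fun h => by rw [← h, add_add_self_cube], fun h => by rw [h, add_add_self_cube]⟩
    simp only [u, e1, add_left_inj, or_comm]
  have hup : ∀ c j, u c (pts j) = c j := by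
    intro c j
    simp [u, hy, hinj.eq_iff]
  have hcw : (Finset.univ : Finset (Fin w → Bool)).card = 2 ^ w := by simp
  rw [← hcw, ← Finset.card_product]
  apply Finset.card_le_card_of_injOn
    (fun z => (fun x => xor (z x) (u (fun j => xor (z (pts j)) (bits j)) x), fun j => z (pts j)))
  · intro z hz
    simp only [invFns, Finset.coe_filter, mem_univ, true_and, Set.mem_ofPred_eq] at hz
    simp [invFns, hz, hu, hup]
  · intro z _ z' _ h
    obtain ⟨ha, hb⟩ := Prod.mk.inj h
    funext x
    have hx := congrFun ha x
    have hb' : ∀ j, z (pts j) = z' (pts j) := congrFun hb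
    simp only [hb'] at hx
    simpa using hx

/-- The shifts that put two of the points into the same pair. -/
def badShifts {d w : ℕ} (pts : Fin w → (Fin d → ZMod 2)) : Finset (Fin d → ZMod 2) :=
  (Finset.univ : Finset (Fin w)).offDiag.image (fun p => pts p.1 + pts p.2)

lemma card_badShifts_le {d w : ℕ} (pts : Fin w → (Fin d → ZMod 2)) :
    (badShifts pts).card ≤ w.choose 2 := by
  -- `pts i + pts j` is symmetric, so it factors through unordered pairs
  let g : Sym2 (Fin w) → (Fin d → ZMod 2) :=
    Sym2.lift ⟨fun i j => pts i + pts j, fun i j => add_comm _ _⟩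
  have h : badShifts pts
      = ((Finset.univ : Finset (Fin w)).offDiag.image (Function.uncurry Sym2.mk)).image g := by
    rw [Finset.image_image]
    rfl
  rw [h]
  refine Finset.card_image_le.trans (le_of_eq ?_)
  have := Sym2.card_image_offDiag (Finset.univ : Finset (Fin w))
  simpa using this

/-- let `d ≥ 2`, `n = 2^d`, and let `D₀` be the distribution on
`z : ℤ₂^d → {0,1}` obtained by picking a uniform nonzero `y ∈ ℤ₂^d` and, for each
pair `{x, x+y}`, a uniform independent bit `b` with `z(x) = z(x+y) = b`.  Its pmf is
`D₀(z) = (1/(n−1)) · Σ_{y≠0} [z(·+y) = z(·)] · 2^{−n/2}` (with `n/2 = 2^{d−1}`).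
Then for every conjunction `C` of width `w` — specified by `w` distinct points
`pts` and bits `bits`, accepting `z` iff `z(pts j) = bits j` for all `j` —
`Pr_{z←D₀}(C(z)=1) ≥ (1 − binom(w,2)/(n−1)) · 2^{−w}`. -/
theorem stmt_16 (d : ℕ) (hd : 2 ≤ d) (w : ℕ)
    (pts : Fin w → (Fin d → ZMod 2)) (hinj : Function.Injective pts)
    (bits : Fin w → Bool) :
    (1 - ((w : ℝ) * ((w : ℝ) - 1) / 2) / ((2 : ℝ) ^ d - 1)) * (1 / 2 : ℝ) ^ w ≤
      ∑ z : (Fin d → ZMod 2) → Bool,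
        (((1 : ℝ) / ((2 : ℝ) ^ d - 1)) *
            ∑ y ∈ Finset.univ.filter (fun y : Fin d → ZMod 2 => y ≠ 0),
              (if ∀ x, z (x + y) = z x then ((1 : ℝ) / 2) ^ (2 ^ (d - 1)) else 0)) *
          (if ∀ j, z (pts j) = bits j then 1 else 0) := by
  have hpow : (2 : ℝ) ≤ (2 : ℝ) ^ d := by
    calc (2 : ℝ) = 2 ^ 1 := by norm_num
      _ ≤ 2 ^ d := pow_le_pow_right₀ (by norm_num) (by omega)
  have hN : (0 : ℝ) < (2 : ℝ) ^ d - 1 := by linarith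
  set S := Finset.univ.filter (fun y : Fin d → ZMod 2 => y ≠ 0) with hS
  have hSc : (S.card : ℝ) = (2 : ℝ) ^ d - 1 := by
    have h : S = Finset.univ.erase 0 := by
      ext y
      simp [hS]
    rw [h, Finset.card_erase_of_mem (mem_univ _), Nat.cast_sub (by simp [Finset.card_univ, Nat.one_le_two_pow])]
    simp [Finset.card_univ]
  let P : (Fin d → ZMod 2) → ℝ := fun y =>
    (((invFns d y).filter (fun z => ∀ j, z (pts j) = bits j)).card : ℝ)
      * (1 / 2 : ℝ) ^ (2 ^ (d - 1))
  have hrhs : (∑ z : (Fin d → ZMod 2) → Bool,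
        (((1 : ℝ) / ((2 : ℝ) ^ d - 1)) *
            ∑ y ∈ S,
              (if ∀ x, z (x + y) = z x then ((1 : ℝ) / 2) ^ (2 ^ (d - 1)) else 0)) *
          (if ∀ j, z (pts j) = bits j then 1 else 0))
      = (1 / ((2 : ℝ) ^ d - 1)) * ∑ y ∈ S, P y := by
    simp only [mul_assoc]
    rw [← Finset.mul_sum]
    congr 1
    simp only [Finset.sum_mul]
    rw [Finset.sum_comm]
    refine Finset.sum_congr rfl fun y _ => ?_
    simp only [P, invFns, Finset.filter_filter]
    rw [← nsmul_eq_mul, ← Finset.sum_const, Finset.sum_filter]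
    refine Finset.sum_congr rfl fun z _ => ?_
    by_cases h1 : ∀ x, z (x + y) = z x <;> by_cases h2 : ∀ j, z (pts j) = bits j <;>
      simp [h1, h2]
  have hP0 : ∀ y, 0 ≤ P y := fun y => by positivity
  have hgood : ∀ y ∈ S \ badShifts pts, (1 / 2 : ℝ) ^ w ≤ P y := by
    intro y hy
    rw [Finset.mem_sdiff] at hy
    have hy0 : y ≠ 0 := by simpa [hS] using hy.1
    have hsep : ∀ j k, pts j ≠ pts k + y := by
      intro j k h
      have hjk : k ≠ j := by
        rintro rfl
        exact hy0 (by simpa using h)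
      apply hy.2
      refine Finset.mem_image.mpr ⟨(k, j), by simp [hjk], ?_⟩
      simp only [h]
      rw [add_comm (pts k) y, add_comm, add_add_self_cube]
    have h := (two_pow_le_card_inv (by omega) y hy0).trans (card_inv_le pts hinj bits y hsep)
    have h' : (2 : ℝ) ^ (2 ^ (d - 1)) ≤
        (((invFns d y).filter (fun z => ∀ j, z (pts j) = bits j)).card : ℝ) * 2 ^ w := by
      exact_mod_cast h
    simp only [P, one_div, inv_pow]
    rw [← div_eq_mul_inv, le_div_iff₀ (by positivity), inv_mul_le_iff₀ (by positivity)]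
    linarith
  have hcount : (2 : ℝ) ^ d - 1 - (w : ℝ) * ((w : ℝ) - 1) / 2
      ≤ ((S \ badShifts pts).card : ℝ) := by
    have h1 : S.card ≤ (S \ badShifts pts).card + w.choose 2 := by
      have := Finset.le_card_sdiff (badShifts pts) S
      have := card_badShifts_le pts
      omega
    have h2 : (S.card : ℝ) ≤ ((S \ badShifts pts).card : ℝ) + (w.choose 2 : ℝ) := by
      exact_mod_cast h1
    rw [Nat.cast_choose_two, hSc] at h2
    linarith
  rw [hrhs]
  calc (1 - ((w : ℝ) * ((w : ℝ) - 1) / 2) / ((2 : ℝ) ^ d - 1)) * (1 / 2 : ℝ) ^ w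
      = (1 / ((2 : ℝ) ^ d - 1)) *
          (((2 : ℝ) ^ d - 1 - (w : ℝ) * ((w : ℝ) - 1) / 2) * (1 / 2 : ℝ) ^ w) := by
        have := hN.ne'
        field_simp
    _ ≤ (1 / ((2 : ℝ) ^ d - 1)) * (((S \ badShifts pts).card : ℝ) * (1 / 2 : ℝ) ^ w) := by
        gcongr
    _ ≤ (1 / ((2 : ℝ) ^ d - 1)) * ∑ y ∈ S \ badShifts pts, P y := by
        gcongr
        rw [← nsmul_eq_mul]
        exact Finset.card_nsmul_le_sum _ _ _ hgood
    _ ≤ (1 / ((2 : ℝ) ^ d - 1)) * ∑ y ∈ S, P y := by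
        refine mul_le_mul_of_nonneg_left ?_ (by positivity)
        exact Finset.sum_le_sum_of_subset_of_nonneg Finset.sdiff_subset fun y _ _ => hP0 y
end

section
/- Let 𝒳, 𝒴 be finite sets, F : 𝒳×𝒴 → {0,1} a total function, and n ≥ 1. Define AND_n∘F : 𝒳^n × 𝒴^n → {0,1} by (AND_n∘F)((x₁,…,x_n),(y₁,…,y_n)) = ∧_{i=1}^n F(x_i,y_i). Then the unambiguous cover numbers satisfy χ₁(AND_n∘F) ≤ χ₁(F)^n and χ₀(AND_n∘F) ≤ χ₀(F) · Σ_{i=0}^{n−1} χ₁(F)^i. -/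
/-!
Fix optimal unambiguous covers of `F`: `k₁` rectangles for the 1-inputs, `k₀` for the 0-inputs.
A 1-input of `AND_n ∘ F` has a 1-input of `F` in each coordinate, so it lies in exactly one product
of `n` rectangles of the 1-cover; there are `k₁ ^ n` such products. A 0-input has a first coordinate
`m` at which `F` vanishes; it is classified by `m`, the 1-rectangles containing the coordinates
before `m`, and the 0-rectangle containing coordinate `m`, which gives `k₁ ^ m * k₀` disjoint
rectangles for each `m < n`.

`unambCoverNum_le_card` turns a disjoint cover indexed by any finite type into a bound on the cover
number, and `exists_optimal_cover` provides the optimal covers. The latter uses finiteness of the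
input sets: otherwise the infimum defining the cover number could be over the empty set.
-/

open scoped Classical
open Finset

/-- `R : Fin k → Set X × Set Y` is an unambiguous `b`-cover of `F` of size `k`:
each `R i` is a `b`-monochromatic rectangle, the rectangles are pairwise disjoint,
and their union is exactly the set of inputs `(x,y)` with `F(x,y) = b`. -/
def IsUnambBCover {X Y : Type*} (F : X × Y → Bool) (b : Bool) {k : ℕ}
    (R : Fin k → Set X × Set Y) : Prop :=
  (∀ i, ∀ x ∈ (R i).1, ∀ y ∈ (R i).2, F (x, y) = b) ∧
  (∀ x y, F (x, y) = b ↔ ∃ i, x ∈ (R i).1 ∧ y ∈ (R i).2) ∧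
  (∀ i j, i ≠ j → ∀ x y, (x ∈ (R i).1 ∧ y ∈ (R i).2) → ¬(x ∈ (R j).1 ∧ y ∈ (R j).2))

/-- The unambiguous `b`-cover number `χ_b(F)`: the minimum number of rectangles in
an unambiguous `b`-cover (a partition of the `b`-inputs into monochromatic
rectangles). -/
noncomputable def unambCoverNum {X Y : Type*} (F : X × Y → Bool) (b : Bool) : ℕ :=
  sInf {k | ∃ R : Fin k → Set X × Set Y, IsUnambBCover F b R}


theorem unambCoverNum_le_card {X Y ι : Type*} [Fintype ι] (F : X × Y → Bool) (b : Bool)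
    (A : ι → Set X) (B : ι → Set Y)
    (hcov : ∀ x y, F (x, y) = b ↔ ∃ i, x ∈ A i ∧ y ∈ B i)
    (hdisj : ∀ i j x y, x ∈ A i → y ∈ B i → x ∈ A j → y ∈ B j → i = j) :
    unambCoverNum F b ≤ Fintype.card ι := by
  let e := Fintype.equivFin ι
  refine Nat.sInf_le ⟨fun k => (A (e.symm k), B (e.symm k)), ?_, ?_, ?_⟩
  · intro i x hx y hy
    exact (hcov x y).2 ⟨_, hx, hy⟩
  · intro x y
    rw [hcov]
    constructor
    · rintro ⟨i, hi⟩
      exact ⟨e i, by simpa using hi⟩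
    · rintro ⟨i, hi⟩
      exact ⟨_, hi⟩
  · intro i j hij x y hi hj
    exact hij (e.symm.injective (hdisj _ _ x y hi.1 hi.2 hj.1 hj.2))

theorem exists_optimal_cover {X Y : Type*} [Fintype X] [Fintype Y] (F : X × Y → Bool) (b : Bool) :
    ∃ (A : Fin (unambCoverNum F b) → Set X) (B : Fin (unambCoverNum F b) → Set Y),
      (∀ x y, F (x, y) = b ↔ ∃ i, x ∈ A i ∧ y ∈ B i) ∧
      (∀ i j x y, x ∈ A i → y ∈ B i → x ∈ A j → y ∈ B j → i = j) := by
  have hne : {k | ∃ R : Fin k → Set X × Set Y, IsUnambBCover F b R}.Nonempty := by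
    -- The `b`-inputs are partitioned by the singleton rectangles.
    let e := Fintype.equivFin {p : X × Y // F p = b}
    refine ⟨_, fun k => ({(e.symm k).1.1}, {(e.symm k).1.2}), ?_, ?_, ?_⟩
    · rintro i x rfl y rfl
      exact (e.symm i).2
    · intro x y
      constructor
      · intro h
        exact ⟨e ⟨(x, y), h⟩, by simp⟩
      · rintro ⟨i, rfl, rfl⟩
        exact (e.symm i).2
    · rintro i j hij x y ⟨rfl, rfl⟩ ⟨h1, h2⟩
      exact hij (e.symm.injective (Subtype.ext (Prod.ext h1 h2)))
  obtain ⟨R, -, hcov, hdisj⟩ := Nat.sInf_mem hne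
  refine ⟨fun i => (R i).1, fun i => (R i).2, hcov, ?_⟩
  intro i j x y h1 h2 h3 h4
  by_contra hij
  exact hdisj i j hij x y ⟨h1, h2⟩ ⟨h3, h4⟩

/-- for total `F : 𝒳×𝒴 → {0,1}` and `n ≥ 1`, the function
`AND_n∘F` on `𝒳ⁿ × 𝒴ⁿ` satisfies `χ₁(AND_n∘F) ≤ χ₁(F)ⁿ` and
`χ₀(AND_n∘F) ≤ χ₀(F) · Σ_{i=0}^{n−1} χ₁(F)ⁱ`. -/
theorem stmt_19 {X Y : Type*} [Fintype X] [Fintype Y]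
    (F : X × Y → Bool) (n : ℕ) (hn : 1 ≤ n) :
    unambCoverNum (fun q : (Fin n → X) × (Fin n → Y) =>
        decide (∀ i, F (q.1 i, q.2 i) = true)) true ≤ (unambCoverNum F true) ^ n ∧
      unambCoverNum (fun q : (Fin n → X) × (Fin n → Y) =>
        decide (∀ i, F (q.1 i, q.2 i) = true)) false ≤
        unambCoverNum F false * ∑ i ∈ Finset.range n, (unambCoverNum F true) ^ i := by
  obtain ⟨A, B, hcov, hdisj⟩ := exists_optimal_cover F true
  obtain ⟨C, D, hcov0, hdisj0⟩ := exists_optimal_cover F false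
  -- A 0-rectangle and a 1-rectangle of `F` never share an input.
  have hsep : ∀ i j x y, x ∈ A i → y ∈ B i → x ∈ C j → y ∈ D j → False := by
    intro i j x y h1 h2 h3 h4
    have h5 := (hcov x y).2 ⟨i, h1, h2⟩
    have h6 := (hcov0 x y).2 ⟨j, h3, h4⟩
    simp [h5] at h6
  constructor
  · refine (unambCoverNum_le_card (ι := Fin n → Fin (unambCoverNum F true)) _ _
      (fun f => {x | ∀ i, x i ∈ A (f i)}) (fun f => {y | ∀ i, y i ∈ B (f i)}) ?_ ?_).trans
      (by simp)
    · intro x y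
      simp only [decide_eq_true_eq, Set.mem_ofPred_eq, hcov, Classical.skolem, forall_and]
    · intro f g x y h1 h2 h3 h4
      funext i
      exact hdisj _ _ _ _ (h1 i) (h2 i) (h3 i) (h4 i)
  · refine (unambCoverNum_le_card
      (ι := Σ m : Fin n, (Fin m → Fin (unambCoverNum F true)) × Fin (unambCoverNum F false)) _ _
      (fun s => {x | (∀ j : Fin s.1, x (j.castLE s.1.2.le) ∈ A (s.2.1 j)) ∧ x s.1 ∈ C s.2.2})
      (fun s => {y | (∀ j : Fin s.1, y (j.castLE s.1.2.le) ∈ B (s.2.1 j)) ∧ y s.1 ∈ D s.2.2})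
      ?_ ?_).trans ?_
    · intro x y
      simp only [decide_eq_false_iff_not, Set.mem_ofPred_eq]
      constructor
      · intro h
        push Not at h
        -- `m` is the first coordinate at which `F` vanishes.
        obtain ⟨m, hm, hmin⟩ := WellFounded.has_min (wellFounded_lt (α := Fin n))
          {i | F (x i, y i) ≠ true} h
        have hpre : ∀ j : Fin m, ∃ i, x (j.castLE m.2.le) ∈ A i ∧ y (j.castLE m.2.le) ∈ B i := by
          intro j
          rw [← hcov]
          by_contra hj
          exact hmin _ hj j.2
        choose f hf using hpre
        obtain ⟨c, hc⟩ := (hcov0 _ _).1 (Bool.eq_false_iff.2 hm)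
        exact ⟨⟨m, f, c⟩, ⟨fun j => (hf j).1, hc.1⟩, ⟨fun j => (hf j).2, hc.2⟩⟩
      · rintro ⟨⟨m, f, c⟩, h1, h2⟩ h
        have := (hcov0 _ _).2 ⟨c, h1.2, h2.2⟩
        simp [h m] at this
    -- Two distinct stopping coordinates would make the smaller one both a 0- and a 1-coordinate.
    · rintro ⟨m, f, c⟩ ⟨m', f', c'⟩ x y ⟨h1, h1'⟩ ⟨h2, h2'⟩ ⟨h3, h3'⟩ ⟨h4, h4'⟩
      dsimp only at *
      obtain hlt | rfl | hlt := lt_trichotomy m m'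
      · exact (hsep _ _ _ _ (h3 ⟨m, hlt⟩) (h4 ⟨m, hlt⟩) h1' h2').elim
      · have hf : f = f' := funext fun j => hdisj _ _ _ _ (h1 j) (h2 j) (h3 j) (h4 j)
        have hc : c = c' := hdisj0 _ _ _ _ h1' h2' h3' h4'
        rw [hf, hc]
      · exact (hsep _ _ _ _ (h1 ⟨m', hlt⟩) (h2 ⟨m', hlt⟩) h3' h4').elim
    · rw [Finset.sum_range, Finset.mul_sum]
      simp [mul_comm]
end
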